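/- arXiv:2603.07945 — 4 statements merged into one kernel-verified Lean document; each statement's English description precedes it below -/
import Mathlib

section
/- Let R be a henselian Gorenstein Noetherian local ring with dim R > 0 and let 𝒳 be a resolving subcategory of the category of finitely generated R-modules all of whose members are maximal Cohen–Macaulay. Then there exists a finitely generated R-module C with C ∈ 𝒞(𝒳) and C ∉ 𝒳. -/
open CategoryTheory IsLocalRing

universe u

noncomputable section

/-- The `i`-th Ext module of two `R`-modules. -/
abbrev ExtMod (R : Type u) [CommRing R] (i : ℕ) (M N : ModuleCat.{u} R) : ModuleCat R :=
  ((Ext R (ModuleCat.{u} R) i).obj (Opposite.op M)).obj N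

/-- Vanishing of the `i`-th Ext module: `Ext_R^i(M, N) = 0`. -/
def ExtVanish (R : Type u) [CommRing R] (i : ℕ) (M N : ModuleCat.{u} R) : Prop :=
  Subsingleton (ExtMod R i M N)

variable (R : Type u) [CommRing R]

/-- `0 → A → B → C → 0` is a short exact sequence. -/
def IsSES {A B C : ModuleCat.{u} R} (f : A →ₗ[R] B) (g : B →ₗ[R] C) : Prop :=
  Function.Injective f ∧ Function.Exact f g ∧ Function.Surjective g

/-- A resolving subcategory of the category of finitely generated `R`-modules. -/
structure IsResolving (𝒳 : Set (ModuleCat.{u} R)) : Prop where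
  finite : ∀ M ∈ 𝒳, Module.Finite R M
  isoClosed : ∀ {M N : ModuleCat.{u} R}, M ∈ 𝒳 → (↥M ≃ₗ[R] ↥N) → N ∈ 𝒳
  freeMem : ∀ M : ModuleCat.{u} R, Module.Finite R M → Module.Free R M → M ∈ 𝒳
  summandClosed : ∀ M N : ModuleCat.{u} R, ModuleCat.of R (↥M × ↥N) ∈ 𝒳 → M ∈ 𝒳
  extClosed : ∀ (A B C : ModuleCat.{u} R) (f : A →ₗ[R] B) (g : B →ₗ[R] C),
    IsSES R f g → A ∈ 𝒳 → C ∈ 𝒳 → B ∈ 𝒳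
  kerClosed : ∀ (A B C : ModuleCat.{u} R) (f : A →ₗ[R] B) (g : B →ₗ[R] C),
    IsSES R f g → B ∈ 𝒳 → C ∈ 𝒳 → A ∈ 𝒳

/-- `f : X → M` is a right `𝒳`-approximation of `M`. -/
def IsRightApprox (𝒳 : Set (ModuleCat.{u} R)) {X M : ModuleCat.{u} R} (f : X →ₗ[R] M) : Prop :=
  X ∈ 𝒳 ∧ ∀ W ∈ 𝒳, ∀ g : ↥W →ₗ[R] ↥M, ∃ h : ↥W →ₗ[R] ↥X, f ∘ₗ h = g

/-- `M` admits a right `𝒳`-approximation. -/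
def HasRightApprox (𝒳 : Set (ModuleCat.{u} R)) (M : ModuleCat.{u} R) : Prop :=
  ∃ (X : ModuleCat.{u} R) (f : X →ₗ[R] M), IsRightApprox R 𝒳 f

/-- `𝒳` is contravariantly infinite: no finitely generated module outside `𝒳` admits
a right `𝒳`-approximation. -/
def ContravariantlyInfinite (𝒳 : Set (ModuleCat.{u} R)) : Prop :=
  ∀ M : ModuleCat.{u} R, Module.Finite R M → M ∉ 𝒳 → ¬ HasRightApprox R 𝒳 M

/-- `𝒳` is contravariantly finite: every finitely generated module admits
a right `𝒳`-approximation. -/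
def ContravariantlyFinite (𝒳 : Set (ModuleCat.{u} R)) : Prop :=
  ∀ M : ModuleCat.{u} R, Module.Finite R M → HasRightApprox R 𝒳 M

/-- The restricted functor `Hom_R(-, C)|_𝒳` is finitely presented, i.e. `C ∈ 𝒞(𝒳)`. -/
def MemCC (𝒳 : Set (ModuleCat.{u} R)) (C : ModuleCat.{u} R) : Prop :=
  ∃ (X₀ X₁ : ModuleCat.{u} R) (g : ↥X₁ →ₗ[R] ↥X₀) (f : ↥X₀ →ₗ[R] ↥C), X₀ ∈ 𝒳 ∧ X₁ ∈ 𝒳 ∧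
    ∀ W ∈ 𝒳, Function.Surjective (fun h : ↥W →ₗ[R] ↥X₀ => f ∘ₗ h) ∧
      Function.Exact (fun h : ↥W →ₗ[R] ↥X₁ => g ∘ₗ h) (fun h : ↥W →ₗ[R] ↥X₀ => f ∘ₗ h)

/-- `𝒳` is coherent: `𝒞(𝒳) = rap 𝒳`. -/
def Coherent (𝒳 : Set (ModuleCat.{u} R)) : Prop :=
  ∀ M : ModuleCat.{u} R, Module.Finite R M → (MemCC R 𝒳 M ↔ HasRightApprox R 𝒳 M)

/-- The right Ext-orthogonal class `𝒳^⊥` of a class `𝒳` of finitely generated modules. -/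
def XPerp (𝒳 : Set (ModuleCat.{u} R)) : Set (ModuleCat.{u} R) :=
  {Y | Module.Finite R Y ∧ ∀ X ∈ 𝒳, ∀ i, 0 < i → ExtVanish R i X Y}

/-- The projective dimension of `M` is at most `n`. -/
def ProjDimLE (M : ModuleCat.{u} R) (n : ℕ) : Prop :=
  ∀ N : ModuleCat.{u} R, ∀ i, n < i → ExtVanish R i M N

/-- The depth of an `R`-module over a local ring: `inf { i | Ext^i(k, M) ≠ 0 }`. -/
def moduleDepth [IsLocalRing R] (M : ModuleCat.{u} R) : ℕ∞ :=
  sInf ((fun i : ℕ => (i : ℕ∞)) ''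
    {i : ℕ | ¬ ExtVanish R i (ModuleCat.of R (ResidueField R)) M})

/-- `M` is a maximal Cohen–Macaulay `R`-module: `depth M ≥ dim R`. -/
def IsMCM [IsLocalRing R] (M : ModuleCat.{u} R) : Prop :=
  ringKrullDim R ≤ (moduleDepth R M : WithBot ℕ∞)

/-- A Gorenstein local ring: `∃ n, Ext^i(M, R) = 0` for every finitely generated `M`
and every `i > n`. -/
def IsGorensteinLocalRing : Prop :=
  ∃ n : ℕ, ∀ M : ModuleCat.{u} R, Module.Finite R M →
    ∀ i, n < i → ExtVanish R i M (ModuleCat.of R R)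

/-- A regular local ring: Noetherian local with `dim R = dim_k 𝔪/𝔪²`. -/
def IsRegularLocal [IsLocalRing R] : Prop :=
  IsNoetherianRing R ∧
    ringKrullDim R = (Module.finrank (ResidueField R) (CotangentSpace R) : ℕ)

/-- Witness that the local ring `R` is a complete intersection: its `𝔪`-adic completion
is `Q/(f₁, …, f_c)` for a regular local ring `Q` and a `Q`-regular sequence `f₁, …, f_c`. -/
structure CompleteIntersectionWitness [IsLocalRing R] : Type (u + 1) where
  Q : Type u
  [commRing : CommRing Q]
  [localRing : IsLocalRing Q]
  regular : IsRegularLocal Q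
  fs : List Q
  regSeq : RingTheory.Sequence.IsRegular Q fs
  equiv : AdicCompletion (maximalIdeal R) R ≃+* Q ⧸ Ideal.span {x : Q | x ∈ fs}

/-- The local ring `R` is a complete intersection. -/
def IsCompleteIntersection [IsLocalRing R] : Prop :=
  Nonempty (CompleteIntersectionWitness R)

end

/-!
Take `C = R/xR` for an `R`-regular `x ∈ 𝔪`, presented by `0 → R → R → R/xR → 0`. The functors
`Hom(W, -)` with `W ∈ 𝒳` keep this sequence exact as soon as `Ext¹(W, R) = 0`. Ischebeck's theorem
gives this vanishing for maximal Cohen–Macaulay `W` once the injective dimension of `R` is at most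
`dim R`, which is Bass' theorem: killing a maximal `R`-regular sequence produces a module `M` of
projective dimension at most `dim R` containing a copy of `k`, so `Ext^n(M, R) = 0`, and hence
`Ext^n(k, R) = 0`, as long as `n` exceeds `dim R` and is the last degree in which `Ext(-, R)` may
be nonzero; a prime filtration propagates the vanishing from `k` to all finitely generated modules.
Finally `R/xR ∉ 𝒳`, since `Ext¹(R/xR, R) = 0` would split the sequence, whereas
`Hom(R/xR, R) = 0`.
-/

section ShortExact

open Abelian

variable {C : Type*} [Category C] [Abelian C] [HasExt C] {S : ShortComplex C}

lemma subsingleton_ext_X₁_of_shortExact (hS : S.ShortExact) {N : C} {n : ℕ}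
    (h₂ : Subsingleton (Abelian.Ext S.X₂ N n)) (h₃ : Subsingleton (Abelian.Ext S.X₃ N (n + 1))) :
    Subsingleton (Abelian.Ext S.X₁ N n) := by
  refine subsingleton_of_forall_eq 0 fun α => ?_
  obtain ⟨β, rfl⟩ := Ext.contravariant_sequence_exact₁ hS N α (add_comm 1 n) (h₃.elim _ _)
  rw [h₂.elim β 0, Ext.comp_zero]

lemma subsingleton_ext_X₂_of_shortExact (hS : S.ShortExact) {N : C} {n : ℕ}
    (h₁ : Subsingleton (Abelian.Ext S.X₁ N n)) (h₃ : Subsingleton (Abelian.Ext S.X₃ N n)) :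
    Subsingleton (Abelian.Ext S.X₂ N n) := by
  refine subsingleton_of_forall_eq 0 fun α => ?_
  obtain ⟨β, rfl⟩ := Ext.contravariant_sequence_exact₂ hS N α (h₁.elim _ _)
  rw [h₃.elim β 0, Ext.comp_zero]

lemma subsingleton_ext_to_X₃_of_shortExact (hS : S.ShortExact) {W : C} {n : ℕ}
    (h₂ : Subsingleton (Abelian.Ext W S.X₂ n)) (h₁ : Subsingleton (Abelian.Ext W S.X₁ (n + 1))) :
    Subsingleton (Abelian.Ext W S.X₃ n) := by
  refine subsingleton_of_forall_eq 0 fun α => ?_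
  obtain ⟨β, rfl⟩ := Ext.covariant_sequence_exact₃ W hS α rfl (h₁.elim _ _)
  rw [h₂.elim β 0, Ext.zero_comp]

lemma subsingleton_ext_of_iso {M M' N : C} (e : M ≅ M') {n : ℕ}
    (h : Subsingleton (Abelian.Ext M' N n)) : Subsingleton (Abelian.Ext M N n) := by
  refine subsingleton_of_forall_eq 0 fun α => ?_
  rw [← Ext.mk₀_id_comp α, ← e.hom_inv_id, ← Ext.mk₀_comp_mk₀_assoc,
    h.elim ((Ext.mk₀ e.inv).comp α (zero_add n)) 0, Ext.comp_zero]

lemma exists_comp_g_eq_of_subsingleton_ext_one (hS : S.ShortExact) {W : C}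
    (h : Subsingleton (Abelian.Ext W S.X₁ 1)) (φ : W ⟶ S.X₃) : ∃ ψ : W ⟶ S.X₂, ψ ≫ S.g = φ := by
  obtain ⟨β, hβ⟩ := Ext.covariant_sequence_exact₃ W hS (Ext.mk₀ φ) (zero_add 1) (h.elim _ _)
  obtain ⟨ψ, rfl⟩ := (Ext.mk₀_bijective _ _).2 β
  rw [Ext.mk₀_comp_mk₀] at hβ
  exact ⟨ψ, (Ext.mk₀_bijective _ _).1 hβ⟩

lemma exists_f_comp_eq_of_subsingleton_ext_one (hS : S.ShortExact) {N : C}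
    (h : Subsingleton (Abelian.Ext S.X₃ N 1)) (φ : S.X₁ ⟶ N) : ∃ ψ : S.X₂ ⟶ N, S.f ≫ ψ = φ := by
  obtain ⟨β, hβ⟩ := Ext.contravariant_sequence_exact₁ hS N (Ext.mk₀ φ) (add_zero 1) (h.elim _ _)
  obtain ⟨ψ, rfl⟩ := (Ext.mk₀_bijective _ _).2 β
  rw [Ext.mk₀_comp_mk₀] at hβ
  exact ⟨ψ, (Ext.mk₀_bijective _ _).1 hβ⟩

end ShortExact

section CommRing

variable {R : Type u} [CommRing R]

lemma ExtVanish.subsingleton_ext {i : ℕ} {M N : ModuleCat.{u} R} (h : ExtVanish R i M N) :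
    Subsingleton (Abelian.Ext M N i) := by
  let P := projectiveResolution M
  have exact_i : (P.complex.linearYonedaObj R N).ExactAt i := by
    rw [HomologicalComplex.exactAt_iff_isZero_homology]
    exact (ModuleCat.isZero_iff_subsingleton.mpr h).of_iso (P.isoExt i N).symm
  refine subsingleton_of_forall_eq 0 fun α => ?_
  obtain ⟨f, hf, rfl⟩ := P.extMk_surjective α (i + 1) rfl
  cases i with
  | zero =>
    rw [HomologicalComplex.exactAt_iff' _ 0 0 1 (by simp) (by simp),
      ShortComplex.moduleCat_exact_iff] at exact_i
    obtain ⟨g, hg⟩ := exact_i f hf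
    have incoming_zero : (HomologicalComplex.sc' (P.complex.linearYonedaObj R N) 0 0 1).f = 0 :=
      (P.complex.linearYonedaObj R N).shape 0 0 (by simp)
    obtain rfl : f = 0 := by
      rw [← hg, incoming_zero]
      rfl
    simp
  | succ i =>
    rw [HomologicalComplex.exactAt_iff' _ i (i + 1) (i + 2) (by simp) (by simp),
      ShortComplex.moduleCat_exact_iff] at exact_i
    obtain ⟨g, hg⟩ := exact_i f hf
    exact (P.extMk_eq_zero_iff f (i + 2) rfl hf i rfl).mpr ⟨g, hg⟩

lemma IsSES.shortExact {A B C : ModuleCat.{u} R} {f : A →ₗ[R] B} {g : B →ₗ[R] C}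
    (h : IsSES R f g) :
    (ModuleCat.shortComplexOfCompEqZero f g h.2.1.linearMap_comp_eq_zero).ShortExact :=
  ModuleCat.shortComplex_shortExact _ h.2.1 h.1 h.2.2

lemma subsingleton_linearMap_of_subsingleton_ext_zero {M N : ModuleCat.{u} R}
    (h : Subsingleton (Abelian.Ext M N 0)) : Subsingleton (M →ₗ[R] N) :=
  have : Subsingleton (M ⟶ N) := Abelian.Ext.addEquiv₀.subsingleton_congr.mp h
  ModuleCat.homAddEquiv.symm.subsingleton

lemma exact_comp_left_of_injective {A B C : Type*} [AddCommGroup A] [AddCommGroup B]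
    [AddCommGroup C] [Module R A] [Module R B] [Module R C] {f : A →ₗ[R] B} {g : B →ₗ[R] C}
    (hf : Function.Injective f) (hfg : Function.Exact f g)
    (W : Type*) [AddCommGroup W] [Module R W] :
    Function.Exact (fun h : W →ₗ[R] A => f ∘ₗ h) (fun h : W →ₗ[R] B => g ∘ₗ h) := by
  refine fun l => ⟨fun hl => ?_, ?_⟩
  · have l_mem_range (w : W) : l w ∈ f.range := (hfg (l w)).mp (LinearMap.congr_fun hl w)
    refine ⟨(LinearEquiv.ofInjective f hf).symm ∘ₗ l.codRestrict f.range l_mem_range, ?_⟩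
    ext w
    exact congrArg Subtype.val
      ((LinearEquiv.ofInjective f hf).apply_symm_apply ⟨l w, l_mem_range w⟩)
  · rintro ⟨m, rfl⟩
    exact LinearMap.ext fun w => hfg.apply_apply_eq_zero (m w)

lemma IsSES.memCC {𝒳 : Set (ModuleCat.{u} R)} {A B C : ModuleCat.{u} R} {f : A →ₗ[R] B}
    {g : B →ₗ[R] C} (h : IsSES R f g) (hA : A ∈ 𝒳) (hB : B ∈ 𝒳)
    (hExt : ∀ W ∈ 𝒳, Subsingleton (Abelian.Ext W A 1)) : MemCC R 𝒳 C := by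
  refine ⟨B, A, f, g, hB, hA, fun W hW => ⟨fun φ => ?_, exact_comp_left_of_injective h.1 h.2.1 W⟩⟩
  obtain ⟨ψ, hψ⟩ := exists_comp_g_eq_of_subsingleton_ext_one h.shortExact (hExt W hW)
    (ModuleCat.ofHom φ)
  exact ⟨ψ.hom, congrArg ModuleCat.Hom.hom hψ⟩

lemma isSES_lsmul_mkQ {M : ModuleCat.{u} R} {x : R} (hx : IsSMulRegular M x) :
    IsSES R (B := M) (C := ModuleCat.of R (QuotSMulTop x M)) (LinearMap.lsmul R M x)
      (Submodule.mkQ _) :=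
  ⟨hx, LinearMap.exact_lsmul_mkQ_smul_top M x, Submodule.mkQ_surjective _⟩

lemma not_subsingleton_ext_one_quotSMulTop {M : ModuleCat.{u} R} {x : R}
    [Nontrivial (QuotSMulTop x M)] (hx : IsSMulRegular M x) :
    ¬ Subsingleton (Abelian.Ext (ModuleCat.of R (QuotSMulTop x M)) M 1) := by
  intro hExt
  have hHom : Subsingleton (QuotSMulTop x M →ₗ[R] M) :=
    hx.linearMap_subsingleton_of_mem_annihilator (QuotSMulTop.mem_annihilator M x)
  obtain ⟨σ, hσ⟩ := exists_comp_g_eq_of_subsingleton_ext_one (isSES_lsmul_mkQ hx).shortExact hExt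
    (𝟙 _)
  obtain ⟨q, hq⟩ := exists_ne (0 : QuotSMulTop x M)
  have mkQ_σ : Submodule.mkQ _ (σ.hom q) = q :=
    LinearMap.congr_fun (congrArg ModuleCat.Hom.hom hσ) q
  rw [hHom.elim σ.hom 0] at mkQ_σ
  exact hq (mkQ_σ.symm.trans (map_zero _))

end CommRing

section InjectiveDimension

open Abelian

variable {R : Type u} [CommRing R]

lemma isSES_subtype_mkQ {M : ModuleCat.{u} R} (N : Submodule R M) :
    IsSES R (A := ModuleCat.of R N) (C := ModuleCat.of R (M ⧸ N)) N.subtype N.mkQ :=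
  ⟨N.injective_subtype, LinearMap.exact_subtype_mkQ N, N.mkQ_surjective⟩

lemma injective_of_subsingleton_ext_quotient {N : ModuleCat.{u} R}
    (h : ∀ I : Ideal R, Subsingleton (Abelian.Ext (ModuleCat.of R (R ⧸ I)) N 1)) :
    Injective N := by
  refine (Module.injective_iff_injective_object R N).mp (Module.Baer.iff_injective.mp ?_)
  intro I φ
  obtain ⟨ψ, hψ⟩ := exists_f_comp_eq_of_subsingleton_ext_one
    (isSES_subtype_mkQ (M := ModuleCat.of R R) I).shortExact (h I) (ModuleCat.ofHom φ)
  exact ⟨ψ.hom, fun y hy => LinearMap.congr_fun (congrArg ModuleCat.Hom.hom hψ) ⟨y, hy⟩⟩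

lemma hasInjectiveDimensionLE_of_subsingleton_ext_quotient {N : ModuleCat.{u} R} {n : ℕ}
    (h : ∀ I : Ideal R, Subsingleton (Abelian.Ext (ModuleCat.of R (R ⧸ I)) N (n + 1))) :
    HasInjectiveDimensionLE N n := by
  induction n generalizing N with
  | zero =>
    exact injective_iff_hasInjectiveDimensionLT_one.mp (injective_of_subsingleton_ext_quotient h)
  | succ n ih =>
    obtain ⟨P⟩ := EnoughInjectives.presentation N
    have hP := P.shortExact_shortComplex
    refine (hP.hasInjectiveDimensionLT_X₃_iff n P.injective).mp (ih fun I => ?_)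
    exact subsingleton_ext_to_X₃_of_shortExact hP (Ext.subsingleton_of_injective _ P.J n) (h I)

lemma IsGorensteinLocalRing.exists_hasInjectiveDimensionLE (h : IsGorensteinLocalRing R) :
    ∃ n, HasInjectiveDimensionLE (ModuleCat.of R R) n := by
  obtain ⟨n, hn⟩ := h
  exact ⟨n, hasInjectiveDimensionLE_of_subsingleton_ext_quotient fun I =>
    (hn _ inferInstance _ n.lt_succ_self).subsingleton_ext⟩

end InjectiveDimension

section NoetherianRing

open Abelian Pointwise

variable {R : Type u} [CommRing R] [IsNoetherianRing R]

lemma subsingleton_ext_of_subsingleton_ext_quotSMulTop {M N : ModuleCat.{u} R}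
    [Module.Finite R M] [Module.Finite R N] {x : R} (hx : x ∈ Ring.jacobson R)
    (reg : IsSMulRegular M x) {i : ℕ}
    (h : Subsingleton (Abelian.Ext (ModuleCat.of R (QuotSMulTop x M)) N (i + 1))) :
    Subsingleton (Abelian.Ext M N i) := by
  by_contra! ntr
  have hx_jacobson : x ∈ (Module.annihilator R (Abelian.Ext M N i)).jacobson :=
    (Module.annihilator R _).ringJacobson_le_jacobson hx
  -- The long exact sequence makes `x` act surjectively on `Ext^i(M, N)`; conclude by Nakayama.
  refine Submodule.top_ne_pointwise_smul_of_mem_jacobson_annihilator hx_jacobson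
    (top_le_iff.mp fun α _ => ?_).symm
  obtain ⟨β, hβ⟩ : ∃ β : Abelian.Ext M N i, (Ext.mk₀ (x • 𝟙 M)).comp β (zero_add i) = α :=
    Ext.contravariant_sequence_exact₁ reg.smulShortComplex_shortExact _ α (add_comm 1 i)
      (h.elim _ _)
  rw [Ext.mk₀_smul, Ext.smul_comp, Ext.mk₀_id_comp] at hβ
  exact hβ ▸ Submodule.smul_mem_pointwise_smul β x ⊤ trivial

lemma subsingleton_ext_of_forall_quotient_prime (M : ModuleCat.{u} R) [Module.Finite R M]
    {N : ModuleCat.{u} R} {n : ℕ}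
    (h : ∀ p : PrimeSpectrum R, Subsingleton (Abelian.Ext (ModuleCat.of R (R ⧸ p.asIdeal)) N n)) :
    Subsingleton (Abelian.Ext M N n) := by
  refine IsNoetherianRing.induction_on_isQuotientEquivQuotientPrime R ‹Module.Finite R M›
    (motive := fun P _ _ _ => Subsingleton (Abelian.Ext (ModuleCat.of R P) N n)) ?_ ?_ ?_
  · intro P _ _ _ hP
    have : HasProjectiveDimensionLT (ModuleCat.of R P) 0 :=
      (ModuleCat.isZero_iff_subsingleton.mpr hP).hasProjectiveDimensionLT_zero
    exact HasProjectiveDimensionLT.subsingleton _ 0 n n.zero_le N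
  · exact fun P _ _ _ p e => subsingleton_ext_of_iso e.toModuleIso (h p)
  · intro A _ _ _ B _ _ _ C _ _ _ f g hf hg hfg hA hC
    have ses : IsSES R (A := ModuleCat.of R A) (B := ModuleCat.of R B) (C := ModuleCat.of R C)
      f g := ⟨hf, hfg, hg⟩
    exact subsingleton_ext_X₂_of_shortExact ses.shortExact hA hC

end NoetherianRing

lemma injective_of_ne_zero_of_residueField {R : Type*} [CommRing R] [IsLocalRing R]
    {M : Type*} [AddCommGroup M] [Module R M] {f : ResidueField R →ₗ[R] M} (hf : f ≠ 0) :
    Function.Injective f :=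
  have : IsSimpleModule R (ResidueField R) :=
    isSimpleModule_iff_isCoatom.mpr (maximalIdeal.isMaximal R).out
  LinearMap.injective_of_ne_zero hf

lemma IsMCM.extVanish_residueField {R : Type u} [CommRing R] [IsLocalRing R] {M : ModuleCat.{u} R}
    (hM : IsMCM R M) {i : ℕ} (hi : i < ringKrullDim R) :
    ExtVanish R i (ModuleCat.of R (ResidueField R)) M := by
  by_contra hExt
  have depth_le : moduleDepth R M ≤ i := sInf_le ⟨i, hExt, rfl⟩
  exact hi.not_ge (hM.trans (WithBot.coe_le_coe.mpr depth_le))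

lemma exists_ringKrullDim_eq_natCast (R : Type*) [CommRing R] [FiniteRingKrullDim R] :
    ∃ d : ℕ, ringKrullDim R = d := by
  obtain ⟨d, hd⟩ := WithBot.ne_bot_iff_exists.mp (ringKrullDim_ne_bot (R := R))
  have d_ne_top : d ≠ ⊤ := fun h => ringKrullDim_ne_top (R := R) (by rw [← hd, h]; rfl)
  obtain ⟨e, rfl⟩ := ENat.ne_top_iff_exists.mp d_ne_top
  exact ⟨e, hd.symm⟩

section LocalRing

open Abelian

variable {R : Type u} [CommRing R] [IsNoetherianRing R] [IsLocalRing R]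

lemma exists_mem_maximalIdeal_isSMulRegular {M : Type*} [AddCommGroup M] [Module R M]
    [Module.Finite R M] (h : Subsingleton (ResidueField R →ₗ[R] M)) :
    ∃ x ∈ maximalIdeal R, IsSMulRegular M x := by
  obtain ⟨x, hx, reg⟩ := IsSMulRegular.subsingleton_linearMap_iff.mp h
  exact ⟨x, Ideal.annihilator_quotient (I := maximalIdeal R) ▸ hx, reg⟩

/-- Ischebeck's theorem; `s` plays the role of `depth M`. -/
theorem subsingleton_ext_of_subsingleton_ext_residueField (M : ModuleCat.{u} R)
    {N : ModuleCat.{u} R} [Module.Finite R M] [Module.Finite R N] {n s : ℕ}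
    [HasInjectiveDimensionLE N n]
    (h : ∀ i < s, Subsingleton (Abelian.Ext (ModuleCat.of R (ResidueField R)) M i))
    {i : ℕ} (hi : n < i + s) : Subsingleton (Abelian.Ext M N i) := by
  induction s generalizing M i with
  | zero => exact HasInjectiveDimensionLT.subsingleton N (n + 1) i hi M
  | succ s ih =>
    obtain ⟨x, hx, reg⟩ := exists_mem_maximalIdeal_isSMulRegular
      (subsingleton_linearMap_of_subsingleton_ext_zero (h 0 s.succ_pos))
    refine subsingleton_ext_of_subsingleton_ext_quotSMulTop
      ((ringJacobson_eq_maximalIdeal R).ge hx) reg (ih _ (fun j hj => ?_) (by lia))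
    exact subsingleton_ext_to_X₃_of_shortExact (isSES_lsmul_mkQ reg).shortExact (h j (by lia))
      (h (j + 1) (by lia))

lemma hasInjectiveDimensionLE_of_subsingleton_ext_residueField {N : ModuleCat.{u} R}
    [Module.Finite R N] {n : ℕ} [HasInjectiveDimensionLE N (n + 1)]
    (h : Subsingleton (Abelian.Ext (ModuleCat.of R (ResidueField R)) N (n + 1))) :
    HasInjectiveDimensionLE N n := by
  refine hasInjectiveDimensionLE_of_subsingleton_ext_quotient fun I =>
    subsingleton_ext_of_forall_quotient_prime _ fun p => ?_
  rcases (le_maximalIdeal p.isPrime.ne_top).eq_or_lt with hp | hp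
  · rw [hp]
    exact h
  · obtain ⟨x, hx, hxp⟩ := SetLike.exists_of_lt hp
    have reg : IsSMulRegular (R ⧸ p.asIdeal) x :=
      (isSMulRegular_quotient_iff_mem_of_smul_mem _ _).mpr fun y hy =>
        (p.isPrime.mem_or_mem hy).resolve_left hxp
    exact subsingleton_ext_of_subsingleton_ext_quotSMulTop (M := ModuleCat.of R (R ⧸ p.asIdeal))
      ((ringJacobson_eq_maximalIdeal R).ge hx) reg
      (HasInjectiveDimensionLT.subsingleton N (n + 2) (n + 2) le_rfl _)

lemma hasInjectiveDimensionLE_of_residueField_linearMap {M N : ModuleCat.{u} R}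
    [Module.Finite R N] {n m : ℕ} (hM : HasProjectiveDimensionLE M n)
    (hN : HasInjectiveDimensionLE N m) {f : ResidueField R →ₗ[R] M} (hf : f ≠ 0) :
    HasInjectiveDimensionLE N n := by
  rcases le_total m n with hmn | hnm
  · exact hasInjectiveDimensionLT_of_ge N (m + 1) (n + 1) (by lia)
  induction m, hnm using Nat.le_induction with
  | base => exact hN
  | succ m hnm ih =>
    have ses : IsSES R (A := ModuleCat.of R (ResidueField R)) (C := ModuleCat.of R (M ⧸ f.range))
      f f.range.mkQ :=
      ⟨injective_of_ne_zero_of_residueField hf, f.exact_map_mkQ_range, f.range.mkQ_surjective⟩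
    exact ih (hasInjectiveDimensionLE_of_subsingleton_ext_residueField
      (subsingleton_ext_X₁_of_shortExact ses.shortExact
        (HasProjectiveDimensionLT.subsingleton M (n + 1) (m + 1) (by lia) N)
        (HasInjectiveDimensionLT.subsingleton N (m + 2) (m + 2) le_rfl _)))

lemma exists_isSMulRegular_supportDim_quotSMulTop_add_one_eq {M : Type*} [AddCommGroup M]
    [Module R M] [Module.Finite R M] [Nontrivial M] (h : Subsingleton (ResidueField R →ₗ[R] M)) :
    ∃ x : R, IsSMulRegular M x ∧ Nontrivial (QuotSMulTop x M) ∧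
      Module.supportDim R (QuotSMulTop x M) + 1 = Module.supportDim R M := by
  obtain ⟨x, hx, reg⟩ := exists_mem_maximalIdeal_isSMulRegular h
  exact ⟨x, reg, nontrivial_quotSMulTop_of_mem_maximalIdeal M hx,
    Module.supportDim_quotSMulTop_succ_eq_supportDim reg hx⟩

lemma exists_hasProjectiveDimensionLE_and_residueField_linearMap_ne_zero (M : ModuleCat.{u} R)
    [Module.Finite R M] [Nontrivial M] {n d : ℕ} (hM : HasProjectiveDimensionLE M n)
    (hd : Module.supportDim R M ≤ d) :
    ∃ M' : ModuleCat.{u} R, HasProjectiveDimensionLE M' (n + d) ∧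
      ∃ f : ResidueField R →ₗ[R] M', f ≠ 0 := by
  rcases subsingleton_or_nontrivial (ResidueField R →ₗ[R] M) with hom | hom
  swap
  · exact ⟨M, hasProjectiveDimensionLT_of_ge M (n + 1) (n + d + 1) (by lia), exists_ne 0⟩
  obtain ⟨x, reg, _, dim_quot⟩ := exists_isSMulRegular_supportDim_quotSMulTop_add_one_eq hom
  rw [← dim_quot] at hd
  cases d with
  | zero =>
    exact absurd ((ENat.WithBot.add_one_le_zero_iff _).mp hd)
      (Module.supportDim_ne_bot_of_nontrivial R (QuotSMulTop x M))
  | succ d =>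
    have pd_quot : HasProjectiveDimensionLE (ModuleCat.of R (QuotSMulTop x M)) (n + 1) :=
      (isSES_lsmul_mkQ reg).shortExact.hasProjectiveDimensionLT_X₃ (n + 1) hM
        (hasProjectiveDimensionLT_of_ge M (n + 1) (n + 2) (by lia))
    obtain ⟨M', pd_M', hf⟩ := exists_hasProjectiveDimensionLE_and_residueField_linearMap_ne_zero
      (ModuleCat.of R (QuotSMulTop x M)) pd_quot (ENat.WithBot.add_le_add_one_right_iff.mp hd)
    exact ⟨M', by rwa [add_assoc, add_comm 1 d] at pd_M', hf⟩

/-- Bass' theorem. -/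
theorem hasInjectiveDimensionLE_of_ringKrullDim_le (N : ModuleCat.{u} R) [Module.Finite R N]
    {m d : ℕ} (hN : HasInjectiveDimensionLE N m) (hd : ringKrullDim R ≤ d) :
    HasInjectiveDimensionLE N d := by
  have : HasProjectiveDimensionLE (ModuleCat.of R R) 0 :=
    projective_iff_hasProjectiveDimensionLT_one.mp
      ((IsProjective.iff_projective (R := R) R).mp inferInstance)
  obtain ⟨M, hM, f, hf⟩ := exists_hasProjectiveDimensionLE_and_residueField_linearMap_ne_zero
    (ModuleCat.of R R) this ((Module.supportDim_self_eq_ringKrullDim R).trans_le hd)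
  rw [zero_add] at hM
  exact hasInjectiveDimensionLE_of_residueField_linearMap hM hN hf

lemma IsMCM.subsingleton_ext_of_isGorensteinLocalRing {W : ModuleCat.{u} R} [Module.Finite R W]
    (hW : IsMCM R W) (hG : IsGorensteinLocalRing R) {i : ℕ} (hi : 0 < i) :
    Subsingleton (Abelian.Ext W (ModuleCat.of R R) i) := by
  obtain ⟨n, injdim_le⟩ := hG.exists_hasInjectiveDimensionLE
  obtain ⟨d, hd⟩ := exists_ringKrullDim_eq_natCast R
  have := hasInjectiveDimensionLE_of_ringKrullDim_le (ModuleCat.of R R) injdim_le hd.le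
  refine subsingleton_ext_of_subsingleton_ext_residueField W (n := d) (s := d) (fun j hj => ?_)
    (Nat.lt_add_left_iff_pos.mpr hi)
  exact (hW.extVanish_residueField (by rw [hd]; exact_mod_cast hj)).subsingleton_ext

end LocalRing

theorem stmt5_general (R : Type u) [CommRing R] [IsNoetherianRing R] [IsLocalRing R]
    (hG : IsGorensteinLocalRing R) (hdim : 0 < ringKrullDim R) (𝒳 : Set (ModuleCat.{u} R))
    (hR : ModuleCat.of R R ∈ 𝒳) (hfin : ∀ M ∈ 𝒳, Module.Finite R M)
    (hMCM : ∀ M ∈ 𝒳, IsMCM R M) :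
    ∃ C : ModuleCat.{u} R, Module.Finite R C ∧ MemCC R 𝒳 C ∧ C ∉ 𝒳 := by
  have ext_one (W) (hW : W ∈ 𝒳) : Subsingleton (Abelian.Ext W (ModuleCat.of R R) 1) :=
    have := hfin W hW
    (hMCM W hW).subsingleton_ext_of_isGorensteinLocalRing hG one_pos
  have depth_pos : Subsingleton (ResidueField R →ₗ[R] R) :=
    subsingleton_linearMap_of_subsingleton_ext_zero
      ((hMCM _ hR).extVanish_residueField (i := 0) hdim).subsingleton_ext
  obtain ⟨x, hx, reg⟩ := exists_mem_maximalIdeal_isSMulRegular depth_pos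
  have : Nontrivial (QuotSMulTop x R) := nontrivial_quotSMulTop_of_mem_maximalIdeal R hx
  exact ⟨ModuleCat.of R (QuotSMulTop x R), inferInstance,
    (isSES_lsmul_mkQ (M := ModuleCat.of R R) reg).memCC hR hR ext_one,
    fun hC => not_subsingleton_ext_one_quotSMulTop (M := ModuleCat.of R R) reg (ext_one _ hC)⟩

/-- Over a henselian Gorenstein local ring of positive dimension, if all
members of a resolving subcategory `𝒳` are maximal Cohen–Macaulay, then `𝒞(𝒳)` contains
a finitely generated module outside `𝒳`. -/
theorem stmt5 (R : Type u) [CommRing R] [IsNoetherianRing R] [IsLocalRing R]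
    [HenselianLocalRing R] (hG : IsGorensteinLocalRing R) (hdim : 0 < ringKrullDim R)
    (𝒳 : Set (ModuleCat.{u} R)) (h𝒳 : IsResolving R 𝒳) (hMCM : ∀ M ∈ 𝒳, IsMCM R M) :
    ∃ C : ModuleCat.{u} R, Module.Finite R C ∧ MemCC R 𝒳 C ∧ C ∉ 𝒳 :=
  stmt5_general R hG hdim 𝒳
    (h𝒳.freeMem _ (inferInstanceAs (Module.Finite R R)) (inferInstanceAs (Module.Free R R)))
    h𝒳.finite hMCM
end

section
/- Let R be a henselian Gorenstein Noetherian local ring, 𝒳 a resolving subcategory of the category of finitely generated R-modules, and C a finitely generated R-module with C ∈ 𝒞(𝒳). Then there exists a short exact sequence 0 → K → X → C → 0 of finitely generated R-modules such that X ∈ 𝒳 and K admits a right 𝒳-approximation. -/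
open CategoryTheory IsLocalRing

universe u

/-! Given a presentation `X₁ → X₀ → C` of `Hom_R(-, C)|_𝒳`, evaluating it at `R ∈ 𝒳` shows that
`X₀ → C` is surjective. By left exactness of `Hom`, its kernel `K` represents the kernel of
`Hom_R(-, X₀)|_𝒳 → Hom_R(-, C)|_𝒳`; exactness at `X₀` therefore says precisely that every map from
an object of `𝒳` to `K` lifts to `X₁`. -/

section

variable {R : Type u} [CommRing R] {𝒳 : Set (ModuleCat.{u} R)}

lemma IsResolving.self_mem (h𝒳 : IsResolving R 𝒳) : ModuleCat.of R R ∈ 𝒳 :=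
  h𝒳.freeMem _ (inferInstanceAs (Module.Finite R R)) (inferInstanceAs (Module.Free R R))

lemma IsRightApprox.surjective {X M : ModuleCat.{u} R} {f : X →ₗ[R] M}
    (hf : IsRightApprox R 𝒳 f) (hR : ModuleCat.of R R ∈ 𝒳) : Function.Surjective f := by
  intro m
  obtain ⟨h, hh⟩ := hf.2 _ hR (LinearMap.toSpanSingleton R M m)
  refine ⟨h (1 : R), ?_⟩
  calc f (h (1 : R)) = LinearMap.toSpanSingleton R M m 1 := LinearMap.congr_fun hh (1 : R)
    _ = m := LinearMap.toSpanSingleton_apply_one R M m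

lemma isSES_subtype_ker {X M : ModuleCat.{u} R} {f : X →ₗ[R] M} (hf : Function.Surjective f) :
    IsSES R (A := ModuleCat.of R (LinearMap.ker f)) (LinearMap.ker f).subtype f :=
  ⟨Submodule.subtype_injective _, f.exact_subtype_ker_map, hf⟩

lemma hasRightApprox_ker_of_exact_comp {X₀ X₁ M : ModuleCat.{u} R} {g : X₁ →ₗ[R] X₀}
    {f : X₀ →ₗ[R] M} (h₁ : X₁ ∈ 𝒳)
    (hexact : ∀ W ∈ 𝒳, Function.Exact (fun h : ↥W →ₗ[R] ↥X₁ => g ∘ₗ h)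
      (fun h : ↥W →ₗ[R] ↥X₀ => f ∘ₗ h)) :
    HasRightApprox R 𝒳 (ModuleCat.of R (LinearMap.ker f)) := by
  have hfg : f ∘ₗ g = 0 := (hexact X₁ h₁).apply_apply_eq_zero LinearMap.id
  refine ⟨X₁, g.codRestrict (LinearMap.ker f) (LinearMap.congr_fun hfg), h₁, fun W hW k => ?_⟩
  have hfk : f ∘ₗ (LinearMap.ker f).subtype ∘ₗ k = 0 := LinearMap.ext fun w => (k w).2
  obtain ⟨h, hh⟩ := (hexact W hW _).1 hfk
  exact ⟨h, LinearMap.ext fun w => Subtype.ext (LinearMap.congr_fun hh w)⟩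

lemma MemCC.exists_isRightApprox_hasRightApprox_ker {C : ModuleCat.{u} R} (hC : MemCC R 𝒳 C) :
    ∃ (X : ModuleCat.{u} R) (f : X →ₗ[R] C),
      IsRightApprox R 𝒳 f ∧ HasRightApprox R 𝒳 (ModuleCat.of R (LinearMap.ker f)) := by
  obtain ⟨X₀, X₁, g, f, h₀, h₁, hpres⟩ := hC
  exact ⟨X₀, f, ⟨h₀, fun W hW => (hpres W hW).1⟩,
    hasRightApprox_ker_of_exact_comp h₁ fun W hW => (hpres W hW).2⟩

theorem stmt6_general (hR : ModuleCat.of R R ∈ 𝒳) {C : ModuleCat.{u} R} (hC : MemCC R 𝒳 C) :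
    ∃ (K X : ModuleCat.{u} R) (f : ↥K →ₗ[R] ↥X) (g : ↥X →ₗ[R] ↥C),
      IsSES R f g ∧ X ∈ 𝒳 ∧ HasRightApprox R 𝒳 K := by
  obtain ⟨X, g, hg, hK⟩ := hC.exists_isRightApprox_hasRightApprox_ker
  exact ⟨_, X, _, g, isSES_subtype_ker (hg.surjective hR), hg.1, hK⟩

end

/-- Over a henselian Gorenstein local ring, every `C ∈ 𝒞(𝒳)` fits into a
short exact sequence `0 → K → X → C → 0` with `X ∈ 𝒳` and `K` admitting a right
`𝒳`-approximation. -/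
theorem stmt6 (R : Type u) [CommRing R] [IsNoetherianRing R] [IsLocalRing R]
    [HenselianLocalRing R] (hG : IsGorensteinLocalRing R)
    (𝒳 : Set (ModuleCat.{u} R)) (h𝒳 : IsResolving R 𝒳)
    (C : ModuleCat.{u} R) (hCfg : Module.Finite R C) (hC : MemCC R 𝒳 C) :
    ∃ (K X : ModuleCat.{u} R) (f : ↥K →ₗ[R] ↥X) (g : ↥X →ₗ[R] ↥C),
      IsSES R f g ∧ X ∈ 𝒳 ∧ HasRightApprox R 𝒳 K :=
  stmt6_general h𝒳.self_mem hC
end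

section
/- Let R be a henselian Gorenstein Noetherian local ring and 𝒳 a resolving subcategory of the category of finitely generated R-modules. If 0 → N → M → C → 0 is a short exact sequence of finitely generated R-modules such that M admits a right 𝒳-approximation and C ∈ 𝒞(𝒳), then N admits a right 𝒳-approximation. -/
open CategoryTheory IsLocalRing

universe u

/-!
Let `f : N → M` and `g : M → C` be the maps of the short exact sequence. Lift `g ∘ p`, for a right
approximation `p : X → M`, to `h : X → X₀` along a presentation `g₁ : X₁ → X₀`, `f₀ : X₀ → C` of
`Hom(-, C)` on `𝒳`, and let `K` be the kernel of `(g₁, h) : X₁ × X → X₀`. On `𝒳`, the composite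
`K → X → M` is a weak kernel of `g`: if `g ∘ k = 0`, write `k = p ∘ b`; then `f₀ ∘ h ∘ b = 0`, so
`h ∘ b = g₁ ∘ a` for some `a`, and `(-a, b)` lands in `K`. As `N` is the kernel of `g`, the induced
map `K → N` is an approximation as soon as `K ∈ 𝒳`, and this holds because `(g₁, h)` is onto:
testing on `W = R` shows that `X₁ → X₀ → C` is exact and that `p` is surjective.
-/

section RelativeExactness

universe v

variable {R : Type u} [Ring R] {𝒳 : Set (ModuleCat.{v} R)}
  {A B C D E : Type*} [AddCommGroup A] [AddCommGroup B] [AddCommGroup C] [AddCommGroup D]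
  [AddCommGroup E] [Module R A] [Module R B] [Module R C] [Module R D] [Module R E]

/-- `f` is epic relative to `𝒳`: `Hom(W, -)` makes it surjective for all `W ∈ 𝒳`. A right
`𝒳`-approximation is such an `f` whose source lies in `𝒳`. -/
def IsEpiOn (𝒳 : Set (ModuleCat.{v} R)) (f : A →ₗ[R] B) : Prop :=
  ∀ W ∈ 𝒳, Function.Surjective fun h : W →ₗ[R] A ↦ f ∘ₗ h

/-- `A → B → C` is exact relative to `𝒳`: `Hom(W, -)` makes it exact for all `W ∈ 𝒳`. Equivalently,
`f` is a weak kernel of `g` as far as maps from `𝒳` are concerned. -/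
def IsExactOn (𝒳 : Set (ModuleCat.{v} R)) (f : A →ₗ[R] B) (g : B →ₗ[R] C) : Prop :=
  ∀ W ∈ 𝒳, Function.Exact (fun h : W →ₗ[R] A ↦ f ∘ₗ h) fun h : W →ₗ[R] B ↦ g ∘ₗ h

lemma IsExactOn.comp_eq_zero {f : A →ₗ[R] B} {g : B →ₗ[R] C} (h : IsExactOn 𝒳 f g)
    {W : ModuleCat.{v} R} (hW : W ∈ 𝒳) (k : W →ₗ[R] A) : g ∘ₗ f ∘ₗ k = 0 :=
  (h W hW).apply_apply_eq_zero k

lemma IsExactOn.exists_comp_eq {f : A →ₗ[R] B} {g : B →ₗ[R] C} (h : IsExactOn 𝒳 f g)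
    {W : ModuleCat.{v} R} (hW : W ∈ 𝒳) {k : W →ₗ[R] B} (hk : g ∘ₗ k = 0) :
    ∃ l : W →ₗ[R] A, f ∘ₗ l = k :=
  (h W hW k).1 hk

lemma IsExactOn.ker_coprod {f : A →ₗ[R] B} {g : B →ₗ[R] C} {p : D →ₗ[R] E} {g' : E →ₗ[R] C}
    {h : D →ₗ[R] B} (hfg : IsExactOn 𝒳 f g) (hp : IsEpiOn 𝒳 p) (hh : g ∘ₗ h = g' ∘ₗ p) :
    IsExactOn 𝒳 (p ∘ₗ LinearMap.snd R A D ∘ₗ (LinearMap.ker (f.coprod h)).subtype) g' := by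
  have hh' (d : D) : g (h d) = g' (p d) := LinearMap.congr_fun hh d
  intro W hW k
  constructor
  · intro hk
    obtain ⟨b, rfl⟩ := hp W hW k
    have hb : g ∘ₗ (h ∘ₗ b) = 0 := by rw [← LinearMap.comp_assoc, hh]; exact hk
    obtain ⟨a, ha⟩ := hfg.exists_comp_eq hW hb
    have hmem (w : W) : (-a).prod b w ∈ LinearMap.ker (f.coprod h) := by
      have haw : f (a w) = h (b w) := LinearMap.congr_fun ha w
      simp [haw]
    exact ⟨((-a).prod b).codRestrict _ hmem, rfl⟩
  · rintro ⟨l, rfl⟩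
    ext w
    have hzero : g (f (l w).1.1) = 0 :=
      LinearMap.congr_fun (hfg.comp_eq_zero hW (LinearMap.fst R A D ∘ₗ Submodule.subtype _ ∘ₗ l)) w
    have hker : f (l w).1.1 + h (l w).1.2 = 0 := (l w).2
    calc g' (p (l w).1.2) = g (f (l w).1.1 + h (l w).1.2) := by
          rw [map_add, hzero, zero_add, hh']
      _ = 0 := by rw [hker, map_zero]

lemma coprod_surjective_of_exact {f : A →ₗ[R] B} {g : B →ₗ[R] C} {h : D →ₗ[R] B}
    (hfg : Function.Exact f g) (hgh : Function.Surjective (g ∘ₗ h)) :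
    Function.Surjective (f.coprod h) := by
  intro b
  obtain ⟨d, hd : g (h d) = g b⟩ := hgh (g b)
  obtain ⟨a, ha⟩ := (hfg (b - h d)).1 (by rw [map_sub, hd, sub_self])
  exact ⟨(a, d), by simp [ha]⟩

end RelativeExactness

section TestingOnRing

variable {R : Type u} [Ring R] {𝒳 : Set (ModuleCat.{u} R)}
  {A B C : Type*} [AddCommGroup A] [AddCommGroup B] [AddCommGroup C]
  [Module R A] [Module R B] [Module R C]

lemma IsEpiOn.surjective {f : A →ₗ[R] B} (hf : IsEpiOn 𝒳 f) (hR : ModuleCat.of R R ∈ 𝒳) :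
    Function.Surjective f := by
  intro b
  obtain ⟨l, hl⟩ := hf _ hR (LinearMap.toSpanSingleton R B b)
  exact ⟨l (1 : R), (LinearMap.congr_fun hl (1 : R)).trans (one_smul R b)⟩

lemma IsExactOn.exact {f : A →ₗ[R] B} {g : B →ₗ[R] C} (h : IsExactOn 𝒳 f g)
    (hR : ModuleCat.of R R ∈ 𝒳) : Function.Exact f g := by
  intro b
  constructor
  · intro hb
    obtain ⟨l, hl⟩ := h.exists_comp_eq hR (k := LinearMap.toSpanSingleton R B b) (by ext; simp [hb])
    exact ⟨l (1 : R), (LinearMap.congr_fun hl (1 : R)).trans (one_smul R b)⟩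
  · rintro ⟨a, rfl⟩
    simpa using LinearMap.congr_fun
      (h.comp_eq_zero hR (LinearMap.toSpanSingleton R A a)) (1 : R)

end TestingOnRing

section Approximations

variable {R : Type u} [CommRing R] {𝒳 : Set (ModuleCat.{u} R)}

lemma HasRightApprox.of_isExactOn {Y N M C : ModuleCat.{u} R} {t : Y →ₗ[R] M} {f : N →ₗ[R] M}
    {g : M →ₗ[R] C} (hY : Y ∈ 𝒳) (ht : IsExactOn 𝒳 t g) (hf : Function.Injective f)
    (hfg : Function.Exact f g) : HasRightApprox R 𝒳 N := by
  have hrange (y : Y) : t y ∈ LinearMap.range f :=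
    (hfg _).1 (LinearMap.congr_fun (ht.comp_eq_zero hY LinearMap.id) y)
  let e := LinearEquiv.ofInjective f hf
  let q : Y →ₗ[R] N := e.symm.toLinearMap ∘ₗ t.codRestrict (LinearMap.range f) hrange
  have hq (y : Y) : f (q y) = t y :=
    congrArg Subtype.val (e.apply_symm_apply (t.codRestrict (LinearMap.range f) hrange y))
  refine ⟨Y, q, hY, fun W hW k ↦ ?_⟩
  have hfk : g ∘ₗ f ∘ₗ k = 0 := by
    rw [← LinearMap.comp_assoc, hfg.linearMap_comp_eq_zero, LinearMap.zero_comp]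
  obtain ⟨l, hl⟩ := ht.exists_comp_eq hW hfk
  exact ⟨l, LinearMap.ext fun w ↦ hf ((hq (l w)).trans (LinearMap.congr_fun hl w))⟩

lemma IsResolving.prod_mem (h𝒳 : IsResolving R 𝒳) {A B : ModuleCat.{u} R} (hA : A ∈ 𝒳)
    (hB : B ∈ 𝒳) : ModuleCat.of R (A × B) ∈ 𝒳 :=
  h𝒳.extClosed A (ModuleCat.of R (A × B)) B (LinearMap.inl R A B) (LinearMap.snd R A B)
    ⟨LinearMap.inl_injective, Function.Exact.inl_snd, LinearMap.snd_surjective⟩ hA hB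

lemma IsResolving.ker_mem (h𝒳 : IsResolving R 𝒳) {A B : ModuleCat.{u} R} (hA : A ∈ 𝒳)
    (hB : B ∈ 𝒳) {φ : A →ₗ[R] B} (hφ : Function.Surjective φ) :
    ModuleCat.of R (LinearMap.ker φ) ∈ 𝒳 :=
  h𝒳.kerClosed (ModuleCat.of R (LinearMap.ker φ)) A B (LinearMap.ker φ).subtype φ
    ⟨Subtype.val_injective, LinearMap.exact_subtype_ker_map φ, hφ⟩ hA hB

theorem stmt7_general (hR : ModuleCat.of R R ∈ 𝒳)
    (hprod : ∀ {A B : ModuleCat.{u} R}, A ∈ 𝒳 → B ∈ 𝒳 → ModuleCat.of R (A × B) ∈ 𝒳)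
    (hker : ∀ {A B : ModuleCat.{u} R}, A ∈ 𝒳 → B ∈ 𝒳 → ∀ {φ : A →ₗ[R] B},
      Function.Surjective φ → ModuleCat.of R (LinearMap.ker φ) ∈ 𝒳)
    {N M C : ModuleCat.{u} R} {f : N →ₗ[R] M} {g : M →ₗ[R] C} (hses : IsSES R f g)
    (hM : HasRightApprox R 𝒳 M) (hC : MemCC R 𝒳 C) : HasRightApprox R 𝒳 N := by
  obtain ⟨hf, hfg, hg⟩ := hses
  obtain ⟨X, p, hX, hp : IsEpiOn 𝒳 p⟩ := hM
  obtain ⟨X₀, X₁, g₁, f₀, hX₀, hX₁, hpres⟩ := hC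
  have hexact : IsExactOn 𝒳 g₁ f₀ := fun W hW ↦ (hpres W hW).2
  obtain ⟨h, hh : f₀ ∘ₗ h = g ∘ₗ p⟩ := (hpres X hX).1 (g ∘ₗ p)
  have hsurj : Function.Surjective (g₁.coprod h) := by
    refine coprod_surjective_of_exact (hexact.exact hR) ?_
    rw [hh]
    exact hg.comp (hp.surjective hR)
  have hK : ModuleCat.of R (LinearMap.ker (g₁.coprod h)) ∈ 𝒳 := hker (hprod hX₁ hX) hX₀ hsurj
  exact .of_isExactOn hK (hexact.ker_coprod hp hh) hf hfg

end Approximations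

/-- Over a henselian Gorenstein local ring, given a short exact sequence
`0 → N → M → C → 0` with `M ∈ rap 𝒳` and `C ∈ 𝒞(𝒳)`, one has `N ∈ rap 𝒳`. -/
theorem stmt7 (R : Type u) [CommRing R] [IsNoetherianRing R] [IsLocalRing R]
    [HenselianLocalRing R] (hG : IsGorensteinLocalRing R)
    (𝒳 : Set (ModuleCat.{u} R)) (h𝒳 : IsResolving R 𝒳)
    (N M C : ModuleCat.{u} R) (hNfg : Module.Finite R N) (hMfg : Module.Finite R M)
    (hCfg : Module.Finite R C) (f : ↥N →ₗ[R] ↥M) (g : ↥M →ₗ[R] ↥C)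
    (hses : IsSES R f g) (hM : HasRightApprox R 𝒳 M) (hC : MemCC R 𝒳 C) :
    HasRightApprox R 𝒳 N :=
  stmt7_general h𝒳.self_mem h𝒳.prod_mem h𝒳.ker_mem hses hM hC
end

section
/- Let R be a henselian Gorenstein Noetherian local ring and 𝒳 a resolving subcategory of the category of finitely generated R-modules. A finitely generated R-module C belongs to 𝒞(𝒳) if and only if there exists a short exact sequence 0 → Y → X → C → 0 of finitely generated R-modules such that X ∈ 𝒳, Y admits a right 𝒳-approximation, and Y ∈ 𝒳^⊥. -/
open CategoryTheory IsLocalRing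

universe u

/-!
A module belongs to `𝒞(𝒳)` exactly when it has a right `𝒳`-approximation `f : X → C` whose kernel
has one too. If some endomorphism `g` of `X` with `f ∘ g = f` is not invertible, then Hensel's
lemma, applied to a monic equation satisfied by `g`, yields an idempotent `e ≠ 1` that is still
compatible with `f`; cutting `X` down to the image of `e` lowers its number of generators, so
finitely many such steps make `f` right minimal. By Wakamatsu's lemma the kernel of a right minimal
approximation lies in `𝒳^⊥`. Conversely, the vanishing of `Ext¹(W, Y)` for `W ∈ 𝒳` makes `X → C` an
approximation.
-/

universe v w

section Henselian

open Polynomial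

variable {R : Type u} [CommRing R]

lemma isCoprime_X_sub_C_of_isUnit_eval {p : R[X]} {a : R} (h : IsUnit (p.eval a)) :
    IsCoprime (X - C a) p := by
  rw [← modByMonic_add_div p (X - C a), modByMonic_X_sub_C_eq_C_eval,
    IsCoprime.add_mul_left_right_iff]
  exact isCoprime_one_right.of_isCoprime_of_dvd_right (h.map C).dvd

variable [HenselianLocalRing R]

lemma exists_hasMap_residue_eq (P : StandardEtalePair R) {x : ResidueField R} (hx : P.HasMap x) :
    ∃ a : R, P.HasMap a ∧ residue R a = x := by
  have lift_root := ((HenselianLocalRing.TFAE R).out 0 1 :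
    HenselianLocalRing R ↔ _).mp inferInstance
  obtain ⟨a, ha, rfl⟩ := lift_root P.f P.monic_f x hx.1 hx.isUnit_derivative_f.ne_zero
  refine ⟨a, ⟨by simpa [IsRoot, aeval_def, eval₂_eq_eval_map] using ha, ?_⟩, rfl⟩
  have hg : aeval (residue R a) P.g = residue R (aeval a P.g) :=
    aeval_algebraMap_apply (ResidueField R) a P.g
  exact (isUnit_map_iff (residue R) _).mp (hg ▸ hx.2)

lemma exists_algHom_lift_of_isStandardEtale {B : Type*} [CommRing B] [Algebra R B]
    [Algebra.IsStandardEtale R B] (φ : B →ₐ[R] ResidueField R) :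
    ∃ σ : B →ₐ[R] R, (Algebra.ofId R (ResidueField R)).comp σ = φ := by
  obtain ⟨P⟩ := ‹Algebra.IsStandardEtale R B›.nonempty_standardEtalePresentation
  obtain ⟨a, ha, hres⟩ := exists_hasMap_residue_eq P.P (P.hasMap.map φ)
  refine ⟨(P.lift a ha).comp P.equivRing.toAlgHom, P.hom_ext ?_⟩
  simpa [Algebra.ofId_apply] using hres

lemma exists_algHom_lift_of_etale {B : Type u} [CommRing B] [Algebra R B] [Algebra.Etale R B]
    (φ : B →ₐ[R] ResidueField R) :
    ∃ σ : B →ₐ[R] R, (Algebra.ofId R (ResidueField R)).comp σ = φ := by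
  let Q : Ideal B := RingHom.ker φ
  have : Q.IsPrime := RingHom.ker_isPrime _
  have : Algebra.IsEtaleAt R Q :=
    have : Algebra.FormallyEtale B (Localization.AtPrime Q) := .of_isLocalization Q.primeCompl
    Algebra.FormallyEtale.comp R B _
  obtain ⟨f, hfQ, _⟩ := Algebra.IsEtaleAt.exists_isStandardEtale (R := R) Q
  have hf : IsUnit (φ f) := isUnit_iff_ne_zero.mpr hfQ
  obtain ⟨σ, hσ⟩ := exists_algHom_lift_of_isStandardEtale
    (IsLocalization.Away.liftAlgHom (S := Localization.Away f) (f := φ) f hf)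
  refine ⟨σ.comp (IsScalarTower.toAlgHom R B _), ?_⟩
  rw [← AlgHom.comp_assoc, hσ]
  ext b
  simp

lemma exists_factorization_lift {p : R[X]} (hp : p.Monic) {f g : (ResidueField R)[X]}
    (hf : f.Monic) (hg : g.Monic) (h : p.map (residue R) = f * g) (hfg : IsCoprime f g) :
    ∃ F G : R[X], F * G = p ∧ IsCoprime F G ∧ F.map (residue R) = f ∧ G.map (residue R) = g := by
  have hn : p.natDegree = f.natDegree + g.natDegree := by
    rw [← hf.natDegree_mul hg, ← h, hp.natDegree_map]
  let P : MonicDegreeEq R p.natDegree := .mk p hp rfl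
  let homEquiv (S : Type u) [CommRing S] [Algebra R S] :=
    UniversalCoprimeFactorizationRing.homEquiv S f.natDegree g.natDegree hn P
  let φ := (homEquiv (ResidueField R)).symm ⟨(.mk f hf rfl, .mk g hg rfl), h.symm, hfg⟩
  obtain ⟨σ, hσ⟩ := exists_algHom_lift_of_etale φ
  let q := homEquiv R σ
  have hq : homEquiv (ResidueField R) ((Algebra.ofId R _).comp σ) =
      ⟨(.mk f hf rfl, .mk g hg rfl), h.symm, hfg⟩ := by
    rw [hσ, Equiv.apply_symm_apply]
  refine ⟨q.1.1.1, q.1.2.1, by simpa [P, MonicDegreeEq.mk] using q.2.1, q.2.2, ?_, ?_⟩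
  · exact (congrArg Subtype.val (UniversalCoprimeFactorizationRing.homEquiv_comp_fst R _ _ hn P σ
      (Algebra.ofId R (ResidueField R)))).symm.trans congr(($hq).1.1.1)
  · exact (congrArg Subtype.val (UniversalCoprimeFactorizationRing.homEquiv_comp_snd R _ _ hn P σ
      (Algebra.ofId R (ResidueField R)))).symm.trans congr(($hq).1.2.1)

lemma isUnit_eval_of_eval_map_residue_ne_zero {p : R[X]} {a : R}
    (h : (p.map (residue R)).eval (residue R a) ≠ 0) : IsUnit (p.eval a) := by
  rw [← isUnit_map_iff (residue R), ← eval_map_apply]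
  exact h.isUnit

lemma exists_coprime_factorization {p : R[X]} (hp : p.Monic) :
    ∃ F G : R[X], F * G = p ∧ IsCoprime F G ∧ IsCoprime (X - C 1) F ∧ IsCoprime (X - C 0) G := by
  obtain ⟨q, hpq, hq⟩ :=
    exists_eq_pow_rootMultiplicity_mul_and_not_dvd _ (hp.map (residue R)).ne_zero 0
  set n := rootMultiplicity 0 (p.map (residue R))
  have hX : ((X - C 0 : (ResidueField R)[X]) ^ n).Monic := (monic_X_sub_C _).pow _
  have hqm : q.Monic := hX.of_mul_monic_left (hpq ▸ hp.map _)
  have hcop : IsCoprime ((X - C 0) ^ n) q :=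
    ((irreducible_X_sub_C _).coprime_iff_not_dvd.mpr hq).pow_left
  obtain ⟨F, G, hFG, hco, hF, hG⟩ := exists_factorization_lift hp hX hqm hpq hcop
  refine ⟨F, G, hFG, hco, isCoprime_X_sub_C_of_isUnit_eval ?_, isCoprime_X_sub_C_of_isUnit_eval ?_⟩
  · apply isUnit_eval_of_eval_map_residue_ne_zero
    simp [hF]
  · apply isUnit_eval_of_eval_map_residue_ne_zero
    rwa [hG, map_zero, ne_eq, ← IsRoot.def, ← dvd_iff_isRoot]

lemma exists_isIdempotentElem_dvd {S : Type*} [CommRing S] [Algebra R S] {e : S}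
    (he : IsIntegral R e) : ∃ ρ : S, IsIdempotentElem ρ ∧ e ∣ ρ ∧ 1 - e ∣ 1 - ρ := by
  obtain ⟨p, hp, hpe⟩ := he
  obtain ⟨F, G, rfl, hFG, hF, hG⟩ := exists_coprime_factorization hp
  have hzero : aeval e F * aeval e G = 0 := by rw [← map_mul]; exact hpe
  obtain ⟨u, v, huv⟩ := hFG.map (aeval e).toRingHom
  have hF : IsCoprime (1 - e) (aeval e F) := by
    simpa using (hF.map (aeval e).toRingHom).neg_left
  have hG : IsCoprime e (aeval e G) := by simpa using hG.map (aeval e).toRingHom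
  change u * aeval e F + v * aeval e G = 1 at huv
  refine ⟨u * aeval e F, ?_, hG.dvd_of_dvd_mul_right ?_, hF.dvd_of_dvd_mul_right ?_⟩
  · rw [IsIdempotentElem]
    linear_combination u * aeval e F * huv - u * v * hzero
  · rw [mul_assoc, hzero, mul_zero]
    exact dvd_zero e
  · have : (1 - u * aeval e F) * aeval e F = 0 := by
      linear_combination aeval e F * -huv + v * hzero
    exact this ▸ dvd_zero (1 - e)

lemma exists_isIdempotentElem_ne_one {A : Type*} [Ring A] [Algebra R A] {a : A}
    (ha : IsIntegral R a) (hu : ¬ IsUnit a) :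
    ∃ e : A, IsIdempotentElem e ∧ e ≠ 1 ∧ 1 - a ∣ 1 - e := by
  let ι := (Algebra.adjoin R {a}).val
  let a' : Algebra.adjoin R {a} := ⟨a, Algebra.self_mem_adjoin_singleton R a⟩
  have ha' : IsIntegral R a' := (isIntegral_algHom_iff ι Subtype.val_injective).mp ha
  obtain ⟨e, he, hdvd, hdvd'⟩ := exists_isIdempotentElem_dvd ha'
  refine ⟨ι e, he.map ι, fun h => hu ?_, by simpa [a', ι] using map_dvd ι hdvd'⟩
  have he1 : e = 1 := Subtype.val_injective h
  exact (isUnit_of_dvd_one (he1 ▸ hdvd)).map ι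

end Henselian

section RightMinimal

open TensorProduct Module

variable {R : Type*} [CommRing R] {X C : Type*} [AddCommGroup X] [Module R X]
  [AddCommGroup C] [Module R C]

/-- A homomorphism `f : X → C` is right minimal if every endomorphism of `X` over `C` is an
automorphism. -/
def IsRightMinimal (f : X →ₗ[R] C) : Prop :=
  ∀ g : End R X, f ∘ₗ g = f → IsUnit g

lemma IsRightMinimal.exists_retraction {E : Type*} [AddCommGroup E] [Module R E]
    {f : X →ₗ[R] C} (hf : IsRightMinimal f) {a : X →ₗ[R] E} {t : E →ₗ[R] X}
    (h : f ∘ₗ t ∘ₗ a = f) : ∃ r : E →ₗ[R] X, r ∘ₗ a = .id ∧ f ∘ₗ r = f ∘ₗ t := by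
  obtain ⟨g, hg⟩ := hf (t ∘ₗ a) h
  have hfg : f ∘ₗ (↑g⁻¹ : End R X) = f := by
    conv_lhs => rw [← h, ← hg]
    exact congr(f ∘ₗ $(g.mul_inv))
  refine ⟨(↑g⁻¹ : End R X) ∘ₗ t, ?_, by rw [← LinearMap.comp_assoc, hfg]⟩
  rw [LinearMap.comp_assoc, ← hg]
  exact g.inv_mul

lemma finite_ker_of_isIdempotentElem [Module.Finite R X] {e : End R X} (he : IsIdempotentElem e) :
    Module.Finite R (LinearMap.ker e) := by
  rw [LinearMap.IsIdempotentElem.ker_eq_range he]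
  infer_instance

lemma finrank_residueField_tensor_range_lt [IsLocalRing R] [Module.Finite R X] {e : End R X}
    (he : IsIdempotentElem e) (he1 : e ≠ 1) :
    finrank (ResidueField R) (ResidueField R ⊗[R] LinearMap.range e) <
      finrank (ResidueField R) (ResidueField R ⊗[R] X) := by
  let k := ResidueField R
  have := finite_ker_of_isIdempotentElem he
  have hker : Nontrivial (LinearMap.ker e) := by
    rw [Submodule.nontrivial_iff_ne_bot]
    contrapose! he1
    exact LinearMap.ext fun x => LinearMap.ker_eq_bot.mp he1 (LinearMap.congr_fun he x)
  have : Nontrivial (k ⊗[R] LinearMap.ker e) := by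
    by_contra! h
    exact not_subsingleton _ (IsLocalRing.subsingleton_tensorProduct.mp h)
  let φ : ((k ⊗[R] LinearMap.range e) × (k ⊗[R] LinearMap.ker e)) ≃ₗ[k] (k ⊗[R] X) :=
    (TensorProduct.prodRight R k k _ _).symm ≪≫ₗ
      (Submodule.prodEquivOfIsCompl _ _ (LinearMap.IsIdempotentElem.isCompl he)).baseChange R k _ _
  rw [← φ.finrank_eq, finrank_prod]
  exact Nat.lt_add_of_pos_right finrank_pos

lemma exists_isIdempotentElem_comp_eq [HenselianLocalRing R] [Module.Finite R X] {f : X →ₗ[R] C}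
    (hf : ¬ IsRightMinimal f) : ∃ e : End R X, IsIdempotentElem e ∧ e ≠ 1 ∧ f ∘ₗ e = f := by
  rw [IsRightMinimal] at hf
  push Not at hf
  obtain ⟨g, hfg, hg⟩ := hf
  obtain ⟨e, he, he1, s, hs⟩ :=
    exists_isIdempotentElem_ne_one (Algebra.IsIntegral.isIntegral (R := R) g) hg
  refine ⟨e, he, he1, ?_⟩
  have hfs : f ∘ₗ (1 - e) = 0 := by
    rw [hs, End.mul_eq_comp, ← LinearMap.comp_assoc, LinearMap.comp_sub, hfg, End.one_eq_id,
      LinearMap.comp_id, sub_self, LinearMap.zero_comp]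
  rw [LinearMap.comp_sub, sub_eq_zero] at hfs
  exact hfs.symm

lemma exists_retract_isRightMinimal {R : Type*} [CommRing R] [HenselianLocalRing R] {C : Type*}
    [AddCommGroup C] [Module R C] {X : ModuleCat.{v} R} [Module.Finite R X] (f : X →ₗ[R] C) :
    ∃ (X' : ModuleCat.{v} R) (i : X' →ₗ[R] X) (r : X →ₗ[R] X'),
      r ∘ₗ i = .id ∧ f ∘ₗ i ∘ₗ r = f ∧ IsRightMinimal (f ∘ₗ i) := by
  induction hn : finrank (ResidueField R) (ResidueField R ⊗[R] X) using Nat.strong_induction_on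
    generalizing X with
  | _ n ih =>
    by_cases hf : IsRightMinimal f
    · exact ⟨X, .id, .id, rfl, rfl, hf⟩
    obtain ⟨e, he, he1, hfe⟩ := exists_isIdempotentElem_comp_eq hf
    let Y : ModuleCat R := .of R (LinearMap.range e)
    let j : Y →ₗ[R] X := (LinearMap.range e).subtype
    let s : X →ₗ[R] Y := e.rangeRestrict
    have hsj : s ∘ₗ j = .id := by
      ext y
      exact (LinearMap.IsIdempotentElem.mem_range_iff he).mp y.2
    have : Module.Finite R Y := inferInstanceAs (Module.Finite R (LinearMap.range e))
    obtain ⟨X', i, r, hri, hfir, hmin⟩ :=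
      ih _ (hn ▸ finrank_residueField_tensor_range_lt he he1) (f ∘ₗ j) rfl
    exact ⟨X', j ∘ₗ i, r ∘ₗ s, congr(r ∘ₗ $hsj ∘ₗ i).trans hri, congr($hfir ∘ₗ s).trans hfe, hmin⟩

end RightMinimal

section Ext

open Limits

variable {R : Type u} [CommRing R]

lemma extVanish_succ_iff_exists_factorization {X Y : ModuleCat.{u} R} (P : ProjectiveResolution X)
    (n : ℕ) : ExtVanish R (n + 1) X Y ↔ ∀ f : P.complex.X (n + 1) ⟶ Y,
      P.complex.d (n + 2) (n + 1) ≫ f = 0 → ∃ g, P.complex.d (n + 1) n ≫ g = f := by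
  rw [ExtVanish, ← ModuleCat.isZero_iff_subsingleton, (P.isoExt (R := R) (n + 1) Y).isZero_iff,
    ← HomologicalComplex.exactAt_iff_isZero_homology,
    HomologicalComplex.exactAt_iff' _ n (n + 1) (n + 2) (by simp) (by simp),
    ShortComplex.moduleCat_exact_iff]
  rfl

lemma subsingleton_ext_succ_iff_exists_factorization {𝒜 : Type*} [Category* 𝒜] [Abelian 𝒜]
    [HasExt.{w} 𝒜] {X Y : 𝒜} (P : ProjectiveResolution X)
    (n : ℕ) : Subsingleton (Abelian.Ext X Y (n + 1)) ↔ ∀ f : P.complex.X (n + 1) ⟶ Y,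
      P.complex.d (n + 2) (n + 1) ≫ f = 0 → ∃ g, P.complex.d (n + 1) n ≫ g = f := by
  refine ⟨fun _ f hf => ?_, fun h => subsingleton_of_forall_eq 0 fun α => ?_⟩
  · exact (P.extMk_eq_zero_iff f (n + 2) rfl hf n rfl).mp (Subsingleton.elim _ _)
  · obtain ⟨f, hf, rfl⟩ := P.extMk_surjective α (n + 2) rfl
    exact (P.extMk_eq_zero_iff f (n + 2) rfl hf n rfl).mpr (h f hf)

lemma extVanish_succ_iff_subsingleton {X Y : ModuleCat.{u} R} {n : ℕ} :
    ExtVanish R (n + 1) X Y ↔ Subsingleton (Abelian.Ext X Y (n + 1)) := by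
  rw [extVanish_succ_iff_exists_factorization (projectiveResolution X),
    subsingleton_ext_succ_iff_exists_factorization (projectiveResolution X)]

lemma isSES_ker {M C : ModuleCat.{u} R} {f : M →ₗ[R] C} (hf : Function.Surjective f) :
    IsSES R (A := .of R (LinearMap.ker f)) (LinearMap.ker f).subtype f :=
  ⟨Subtype.val_injective, LinearMap.exact_subtype_ker_map f, hf⟩

lemma isSES_of_shortExact {S : ShortComplex (ModuleCat.{u} R)} (hS : S.ShortExact) :
    IsSES R S.f.hom S.g.hom :=
  ⟨hS.moduleCat_injective_f,
    (ShortComplex.ShortExact.moduleCat_exact_iff_function_exact _).mp hS.exact,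
    hS.moduleCat_surjective_g⟩

namespace IsSES

variable {A B C : ModuleCat.{u} R} {f : A →ₗ[R] B} {g : B →ₗ[R] C}

lemma shortExact_s8 (h : IsSES R f g) :
    (ModuleCat.shortComplexOfCompEqZero f g h.2.1.linearMap_comp_eq_zero).ShortExact :=
  ModuleCat.shortComplex_shortExact _ h.2.1 h.1 h.2.2

lemma exists_lift (h : IsSES R f g) {W : ModuleCat.{u} R} (hW : ExtVanish R 1 W A)
    (u : W →ₗ[R] C) : ∃ v : W →ₗ[R] B, g ∘ₗ v = u := by
  rw [extVanish_succ_iff_subsingleton] at hW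
  obtain ⟨x, hx⟩ := Abelian.Ext.covariant_sequence_exact₃ W h.shortExact_s8
    (Abelian.Ext.mk₀ (ModuleCat.ofHom u)) (zero_add 1) (Subsingleton.elim _ _)
  obtain ⟨v, rfl⟩ := (Abelian.Ext.mk₀_bijective _ _).surjective x
  rw [Abelian.Ext.mk₀_comp_mk₀] at hx
  exact ⟨v.hom, congr(($((Abelian.Ext.mk₀_bijective _ _).injective hx)).hom)⟩

lemma extVanish_add_two (h : IsSES R f g) [Module.Projective R B] {N : ModuleCat.{u} R} {n : ℕ}
    (hA : ExtVanish R (n + 1) A N) : ExtVanish R (n + 2) C N := by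
  rw [extVanish_succ_iff_subsingleton] at hA ⊢
  exact (precomp_extClass_surjective_of_projective_X₂ N h.shortExact_s8 (n + 1)).subsingleton

lemma extVanish_one (h : IsSES R f g) [Module.Projective R B] {N : ModuleCat.{u} R}
    (hext : ∀ u : A →ₗ[R] N, ∃ v : B →ₗ[R] N, v ∘ₗ f = u) : ExtVanish R 1 C N := by
  rw [extVanish_succ_iff_subsingleton]
  refine subsingleton_of_forall_eq 0 fun x => ?_
  obtain ⟨y, rfl⟩ := precomp_extClass_surjective_of_projective_X₂ N h.shortExact_s8 0 x
  obtain ⟨u, rfl⟩ := (Abelian.Ext.mk₀_bijective _ _).surjective y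
  obtain ⟨v, hv⟩ := hext u.hom
  obtain rfl : ModuleCat.ofHom f ≫ ModuleCat.ofHom v = u := ModuleCat.hom_ext hv
  rw [← Abelian.Ext.mk₀_comp_mk₀]
  exact h.shortExact_s8.extClass_comp_assoc _ (h := add_comm 1 0)

end IsSES

lemma exists_shortExact_of_isPushout {𝒜 : Type*} [Category* 𝒜] [Abelian 𝒜] {S : ShortComplex 𝒜}
    (hS : S.ShortExact) {X E : 𝒜} {u : S.X₁ ⟶ X} {a : X ⟶ E} {b : S.X₂ ⟶ E}
    (sq : IsPushout u S.f a b) :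
    ∃ (p : E ⟶ S.X₃) (w : a ≫ p = 0), (ShortComplex.mk a p w).ShortExact := by
  have := hS.mono_f
  have := hS.epi_g
  let p : E ⟶ S.X₃ := sq.desc 0 S.g (by simp)
  have hbp : b ≫ p = S.g := sq.inr_desc _ _ _
  have : Mono a := Abelian.mono_inl_of_isColimit _ _ sq.isColimit
  have : Epi p := epi_of_epi_fac hbp
  refine ⟨p, sq.inl_desc _ _ _, { exact := ShortComplex.exact_of_g_is_cokernel _ ?_ }⟩
  refine CokernelCofork.IsColimit.ofπ' _ _ fun {T} k hk => ?_
  have hbk : S.f ≫ b ≫ k = 0 := by rw [← sq.w_assoc, hk, comp_zero]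
  obtain ⟨l, hl⟩ := CokernelCofork.IsColimit.desc' hS.gIsCokernel (b ≫ k) hbk
  refine ⟨l, sq.hom_ext ?_ ?_⟩
  · rw [reassoc_of% sq.inl_desc, zero_comp, hk]
  · rw [reassoc_of% hbp]
    exact hl

end Ext

section Approximation

variable {R : Type u} [CommRing R] {𝒳 : Set (ModuleCat.{u} R)}

namespace IsResolving

lemma ring_mem (h𝒳 : IsResolving R 𝒳) : ModuleCat.of R R ∈ 𝒳 :=
  h𝒳.freeMem _ (inferInstanceAs (Module.Finite R R)) (inferInstanceAs (Module.Free R R))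

lemma mem_of_retract (h𝒳 : IsResolving R 𝒳) {M N : ModuleCat.{u} R} (hM : M ∈ 𝒳)
    {i : N →ₗ[R] M} {r : M →ₗ[R] N} (hri : r ∘ₗ i = .id) : N ∈ 𝒳 := by
  let e := (LinearMap.exact_subtype_ker_map r).splitSurjectiveEquiv Subtype.val_injective ⟨i, hri⟩
  exact h𝒳.summandClosed N (.of R (LinearMap.ker r))
    (h𝒳.isoClosed hM (e.1 ≪≫ₗ LinearEquiv.prodComm R _ N))

lemma exists_projective_isSES (h𝒳 : IsResolving R 𝒳) {W : ModuleCat.{u} R} (hW : W ∈ 𝒳) :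
    ∃ (K F : ModuleCat.{u} R) (i : K →ₗ[R] F) (q : F →ₗ[R] W),
      IsSES R i q ∧ K ∈ 𝒳 ∧ Module.Projective R F := by
  have := h𝒳.finite W hW
  obtain ⟨n, q, hq⟩ := Module.Finite.exists_fin' R W
  let F : ModuleCat.{u} R := .of R (Fin n → R)
  have hF : F ∈ 𝒳 := h𝒳.freeMem F (inferInstanceAs (Module.Finite R (Fin n → R)))
    (inferInstanceAs (Module.Free R (Fin n → R)))
  have hses := isSES_ker (M := F) hq
  exact ⟨_, F, _, q, hses, h𝒳.kerClosed _ _ _ _ _ hses hF hW,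
    inferInstanceAs (Module.Projective R (Fin n → R))⟩

lemma exists_pushout_mem (h𝒳 : IsResolving R 𝒳) {K F W X : ModuleCat.{u} R} {i : K →ₗ[R] F}
    {q : F →ₗ[R] W} (h : IsSES R i q) (hW : W ∈ 𝒳) (hX : X ∈ 𝒳) (u : K →ₗ[R] X) :
    ∃ (E : ModuleCat.{u} R) (a : X ⟶ E) (b : F ⟶ E),
      E ∈ 𝒳 ∧ IsPushout (ModuleCat.ofHom u) (ModuleCat.ofHom i) a b := by
  have sq := IsPushout.of_hasPushout (ModuleCat.ofHom u) (ModuleCat.ofHom i)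
  obtain ⟨p, _, hp⟩ := exists_shortExact_of_isPushout h.shortExact_s8 sq
  exact ⟨_, _, _, h𝒳.extClosed _ _ _ _ _ (isSES_of_shortExact hp) hX hW, sq⟩

end IsResolving

namespace IsRightApprox

variable {X C : ModuleCat.{u} R} {f : X →ₗ[R] C}

lemma surjective_s8 (hf : IsRightApprox R 𝒳 f) (h𝒳 : IsResolving R 𝒳) : Function.Surjective f := by
  intro c
  obtain ⟨h, hh⟩ := hf.2 _ h𝒳.ring_mem (LinearMap.toSpanSingleton R C c)
  exact ⟨h (1 : R), by simpa using LinearMap.congr_fun hh (1 : R)⟩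

lemma comp_section (hf : IsRightApprox R 𝒳 f) (h𝒳 : IsResolving R 𝒳) {X' : ModuleCat.{u} R}
    {i : X' →ₗ[R] X} {r : X →ₗ[R] X'} (hri : r ∘ₗ i = .id) (hfir : f ∘ₗ i ∘ₗ r = f) :
    IsRightApprox R 𝒳 (f ∘ₗ i) := by
  refine ⟨h𝒳.mem_of_retract hf.1 hri, fun W hW u => ?_⟩
  obtain ⟨h, rfl⟩ := hf.2 W hW u
  exact ⟨r ∘ₗ h, congr($hfir ∘ₗ h)⟩

lemma extVanish_one_ker (hf : IsRightApprox R 𝒳 f) (hmin : IsRightMinimal f)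
    (h𝒳 : IsResolving R 𝒳) {W : ModuleCat.{u} R} (hW : W ∈ 𝒳) :
    ExtVanish R 1 W (.of R (LinearMap.ker f)) := by
  obtain ⟨K, F, i, q, h, -, _⟩ := h𝒳.exists_projective_isSES hW
  refine h.extVanish_one fun (u : K →ₗ[R] LinearMap.ker f) => ?_
  let ι := (LinearMap.ker f).subtype
  -- The pushout extension of `W` by `X` retracts onto `X` over `C`, because `f` is minimal.
  obtain ⟨E, a, b, hE, sq⟩ := h𝒳.exists_pushout_mem h hW hf.1 (ι ∘ₗ u)
  have hu : ModuleCat.ofHom (ι ∘ₗ u) ≫ ModuleCat.ofHom f = ModuleCat.ofHom i ≫ 0 := by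
    ext k
    exact (u k).2
  obtain ⟨t, ht⟩ := hf.2 E hE (sq.desc (ModuleCat.ofHom f) 0 hu).hom
  have hta : f ∘ₗ t ∘ₗ a.hom = f := by
    rw [← LinearMap.comp_assoc, ht]
    exact congr(($(sq.inl_desc _ _ hu)).hom)
  obtain ⟨r, hra, hfr⟩ := hmin.exists_retraction hta
  have hfrb : f ∘ₗ r ∘ₗ b.hom = 0 := by
    rw [← LinearMap.comp_assoc, hfr, ht]
    exact congr(($(sq.inr_desc _ _ hu)).hom)
  refine ⟨(r ∘ₗ b.hom).codRestrict _ (LinearMap.congr_fun hfrb), ?_⟩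
  have hrbi : r ∘ₗ b.hom ∘ₗ i = ι ∘ₗ u :=
    calc r ∘ₗ b.hom ∘ₗ i = (r ∘ₗ a.hom) ∘ₗ ι ∘ₗ u := congr(r ∘ₗ ($sq.w).hom).symm
      _ = ι ∘ₗ u := by rw [hra, LinearMap.id_comp]
  ext k
  exact LinearMap.congr_fun hrbi k

lemma extVanish_succ_ker (hf : IsRightApprox R 𝒳 f) (hmin : IsRightMinimal f)
    (h𝒳 : IsResolving R 𝒳) (n : ℕ) {W : ModuleCat.{u} R} (hW : W ∈ 𝒳) :
    ExtVanish R (n + 1) W (.of R (LinearMap.ker f)) := by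
  induction n generalizing W with
  | zero => exact hf.extVanish_one_ker hmin h𝒳 hW
  | succ n ih =>
    obtain ⟨K, F, i, q, h, hK, _⟩ := h𝒳.exists_projective_isSES hW
    exact h.extVanish_add_two (ih hK)

end IsRightApprox

namespace HasRightApprox

variable {M N : ModuleCat.{u} R}

lemma finite (hM : HasRightApprox R 𝒳 M) (h𝒳 : IsResolving R 𝒳) : Module.Finite R M := by
  obtain ⟨X, f, hf⟩ := hM
  have := h𝒳.finite X hf.1
  exact .of_surjective f (hf.surjective_s8 h𝒳)

lemma of_retract (hM : HasRightApprox R 𝒳 M) {i : N →ₗ[R] M} {r : M →ₗ[R] N}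
    (hri : r ∘ₗ i = .id) : HasRightApprox R 𝒳 N := by
  obtain ⟨X, f, hX, hf⟩ := hM
  refine ⟨X, r ∘ₗ f, hX, fun W hW u => ?_⟩
  obtain ⟨h, hh⟩ := hf W hW (i ∘ₗ u)
  exact ⟨h, congr(r ∘ₗ $hh).trans congr($hri ∘ₗ u)⟩

lemma ker_comp_section {X X' C : ModuleCat.{u} R} {f : X →ₗ[R] C}
    (hf : HasRightApprox R 𝒳 (.of R (LinearMap.ker f))) {i : X' →ₗ[R] X} {r : X →ₗ[R] X'}
    (hri : r ∘ₗ i = .id) (hfir : f ∘ₗ i ∘ₗ r = f) :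
    HasRightApprox R 𝒳 (.of R (LinearMap.ker (f ∘ₗ i))) := by
  let j : LinearMap.ker (f ∘ₗ i) →ₗ[R] LinearMap.ker f := i.restrict fun _ hx => hx
  let s : LinearMap.ker f →ₗ[R] LinearMap.ker (f ∘ₗ i) :=
    r.restrict fun x hx => (LinearMap.congr_fun hfir x).trans hx
  have hsj : s ∘ₗ j = .id :=
    LinearMap.ext fun x => Subtype.ext (LinearMap.congr_fun hri x)
  exact hf.of_retract hsj

end HasRightApprox

lemma IsSES.hasRightApprox_ker {A B C : ModuleCat.{u} R} {f : A →ₗ[R] B} {g : B →ₗ[R] C}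
    (h : IsSES R f g) (hA : HasRightApprox R 𝒳 A) :
    HasRightApprox R 𝒳 (.of R (LinearMap.ker g)) := by
  let e := LinearEquiv.ofInjective f h.1 ≪≫ₗ .ofEq _ _ h.2.1.linearMap_ker_eq.symm
  exact hA.of_retract (i := e.symm.toLinearMap) (r := e.toLinearMap) e.comp_symm

lemma memCC_iff_exists_isRightApprox {C : ModuleCat.{u} R} : MemCC R 𝒳 C ↔
    ∃ (X : ModuleCat.{u} R) (f : X →ₗ[R] C),
      IsRightApprox R 𝒳 f ∧ HasRightApprox R 𝒳 (.of R (LinearMap.ker f)) := by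
  constructor
  · rintro ⟨X₀, X₁, g, f, hX₀, hX₁, h⟩
    have hfg : f ∘ₗ g = 0 := ((h X₁ hX₁).2 g).mpr ⟨.id, rfl⟩
    refine ⟨X₀, f, ⟨hX₀, fun W hW => (h W hW).1⟩,
      X₁, g.codRestrict (LinearMap.ker f) (LinearMap.congr_fun hfg), hX₁, fun W hW u => ?_⟩
    let ι := (LinearMap.ker f).subtype
    obtain ⟨v, hv⟩ := ((h W hW).2 (ι ∘ₗ u)).mp (LinearMap.ext fun w => (u w).2)
    exact ⟨v, LinearMap.ext fun w => Subtype.ext (LinearMap.congr_fun hv w)⟩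
  · rintro ⟨X, f, hf, X₁, p, hX₁, hp⟩
    let ι := (LinearMap.ker f).subtype
    refine ⟨X, X₁, ι ∘ₗ p, f, hf.1, hX₁, fun W hW => ⟨hf.2 W hW, fun u => ⟨fun hu => ?_, ?_⟩⟩⟩
    · obtain ⟨v, hv⟩ := hp W hW (u.codRestrict _ (LinearMap.congr_fun hu))
      exact ⟨v, congr(ι ∘ₗ $hv)⟩
    · rintro ⟨v, rfl⟩
      exact LinearMap.ext fun w => (p (v w)).2

theorem stmt8_general [HenselianLocalRing R] (h𝒳 : IsResolving R 𝒳) (C : ModuleCat.{u} R) :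
    MemCC R 𝒳 C ↔
      ∃ (Y X : ModuleCat.{u} R) (f : Y →ₗ[R] X) (g : X →ₗ[R] C),
        IsSES R f g ∧ X ∈ 𝒳 ∧ HasRightApprox R 𝒳 Y ∧ Y ∈ XPerp R 𝒳 := by
  rw [memCC_iff_exists_isRightApprox]
  constructor
  · rintro ⟨X, f, hf, hker⟩
    have := h𝒳.finite X hf.1
    obtain ⟨X', i, r, hri, hfir, hmin⟩ := exists_retract_isRightMinimal f
    have hf' := hf.comp_section h𝒳 hri hfir
    have hker' := hker.ker_comp_section hri hfir
    refine ⟨_, X', _, f ∘ₗ i, isSES_ker (hf'.surjective_s8 h𝒳), hf'.1, hker', hker'.finite h𝒳, ?_⟩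
    intro W hW n hn
    obtain ⟨m, rfl⟩ := Nat.exists_eq_succ_of_ne_zero hn.ne'
    exact hf'.extVanish_succ_ker hmin h𝒳 m hW
  · rintro ⟨Y, X, f, g, h, hX, hY, -, hperp⟩
    exact ⟨X, g, ⟨hX, fun W hW => h.exists_lift (hperp W hW 1 one_pos)⟩, h.hasRightApprox_ker hY⟩

end Approximation

/-- Over a henselian Gorenstein local ring, a finitely generated module `C`
belongs to `𝒞(𝒳)` iff there is a short exact sequence `0 → Y → X → C → 0` with `X ∈ 𝒳`,
`Y ∈ rap 𝒳` and `Y ∈ 𝒳^⊥`. -/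
theorem stmt8 (R : Type u) [CommRing R] [IsNoetherianRing R] [IsLocalRing R]
    [HenselianLocalRing R] (hG : IsGorensteinLocalRing R)
    (𝒳 : Set (ModuleCat.{u} R)) (h𝒳 : IsResolving R 𝒳)
    (C : ModuleCat.{u} R) (hCfg : Module.Finite R C) :
    MemCC R 𝒳 C ↔
      ∃ (Y X : ModuleCat.{u} R) (f : ↥Y →ₗ[R] ↥X) (g : ↥X →ₗ[R] ↥C),
        IsSES R f g ∧ X ∈ 𝒳 ∧ HasRightApprox R 𝒳 Y ∧ Y ∈ XPerp R 𝒳 := by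
  exact stmt8_general h𝒳 C
end
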